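/- (Symmetrization for empirical expansion.) Let A, B ⊆ X with P(A), P(B) > 0, let n : X → X be a fixed map with n(x) ∈ B for all x ∈ A, and let M be a (finite, since X is finite) family of subsets of B with q(U) := P(U|B) ≥ q̄ > 0 for every U ∈ M. For U ∈ M let p(U) = P({x : n(x) ∈ U} | A) and c(U) = p(U)/q(U). Draw an i.i.d. sample x_1,…,x_{n_A} ∼ P(·|A), z_1,…,z_{n_B} ∼ P(·|B), and an independent ghost sample x'_1,…,x'_{n_A} ∼ P(·|A), z'_1,…,z'_{n_B} ∼ P(·|B); let ĉ(U) and ĉ'(U) be the corresponding empirical ratios (1/n_A Σ_i 1[n(x_i) ∈ U])/(1/n_B Σ_j 1[z_j ∈ U]) on the original and ghost samples respectively, and set γ = n_B·q̄/n_A. Then for any t > 0 with n_A·t² ≥ (4 + √γ)²·log 16/(γ·q̄²): Pr[ sup_{U ∈ M} ( ĉ(U) − c(U) ) > t ] ≤ 2·Pr[ sup_{U ∈ M} ( ĉ(U) − ĉ'(U) ) > t/2 ]. -/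

import Mathlib

open Finset
open scoped Classical

noncomputable section

variable {X : Type*} [Fintype X] [DecidableEq X]

/-- Probability of a finite set of points under the weight function `μ`. -/
def Pw (μ : X → ℝ) (A : Finset X) : ℝ := ∑ x ∈ A, μ x

/-- Conditional probability `P(A | B) = P(A ∩ B) / P(B)`. -/
def cPw (μ : X → ℝ) (A B : Finset X) : ℝ := Pw μ (A ∩ B) / Pw μ B

/-- The conditional point mass function of `P(· | A)`. -/
def condPMF (μ : X → ℝ) (A : Finset X) (x : X) : ℝ :=
  (if x ∈ A then μ x else 0) / Pw μ A

/-- The probability that an i.i.d. sample from `P(· | A)` equals the tuple `xs`. -/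
def prodW (μ : X → ℝ) (A : Finset X) {n : ℕ} (xs : Fin n → X) : ℝ :=
  ∏ j, condPMF μ A (xs j)

/-- Probability of an event `E` of two mutually independent i.i.d. samples,
of sizes `nA` from `P(· | A)` and `nB` from `P(· | B)`. -/
def samplePr (μ : X → ℝ) (A B : Finset X) (nA nB : ℕ)
    (E : (Fin nA → X) → (Fin nB → X) → Prop) : ℝ :=
  ∑ xs : Fin nA → X, ∑ zs : Fin nB → X,
    prodW μ A xs * prodW μ B zs * (if E xs zs then 1 else 0)

/-- Probability of an event of two i.i.d. samples together with an independent
ghost copy of each. -/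
def samplePr4 (μ : X → ℝ) (A B : Finset X) (nA nB : ℕ)
    (E : (Fin nA → X) → (Fin nB → X) → (Fin nA → X) → (Fin nB → X) → Prop) : ℝ :=
  ∑ xs : Fin nA → X, ∑ zs : Fin nB → X, ∑ xs' : Fin nA → X, ∑ zs' : Fin nB → X,
    prodW μ A xs * prodW μ B zs * prodW μ A xs' * prodW μ B zs' *
      (if E xs zs xs' zs' then 1 else 0)

/-- Empirical frequency `(1/n)·Σ_j 1[g(x_j) ∈ U]` of a sample `xs`. -/
def empFreq (U : Finset X) (g : X → X) {n : ℕ} (xs : Fin n → X) : ℝ :=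
  (∑ j, if g (xs j) ∈ U then (1 : ℝ) else 0) / n

/-- The empirical expansion ratio `ĉ(U) = p̂(U)/q̂(U)` of a pair of samples. -/
def empRatio (U : Finset X) (g : X → X) {nA nB : ℕ}
    (xs : Fin nA → X) (zs : Fin nB → X) : ℝ :=
  empFreq U g xs / empFreq U id zs

set_option linter.unusedSectionVars false

lemma sum_fin_succ_fun {m : ℕ} (F : (Fin (m+1) → X) → ℝ) :
    ∑ xs, F xs = ∑ x : X, ∑ ys : Fin m → X, F (Fin.cons x ys) := by
  rw [← Fintype.sum_prod_type']
  exact (Fintype.sum_equiv (Fin.consEquiv (fun _ : Fin (m+1) => X)) _ _ (fun _ => rfl)).symm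

lemma sum_prod_one (w : X → ℝ) (hw : ∑ x, w x = 1) (m : ℕ) :
    ∑ xs : Fin m → X, ∏ j, w (xs j) = 1 := by
  induction m with
  | zero => simp
  | succ m ih =>
    rw [sum_fin_succ_fun]
    simp only [Fin.prod_univ_succ, Fin.cons_zero, Fin.cons_succ]
    simp only [← Finset.mul_sum, ih, mul_one, hw]

lemma sum_prod_sq (w f : X → ℝ) (hw : ∑ x, w x = 1) (hf : ∑ x, w x * f x = 0) (m : ℕ) :
    ∀ c : ℝ, ∑ xs : Fin m → X, (∏ j, w (xs j)) * (∑ j, f (xs j) + c) ^ 2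
      = m * (∑ x, w x * f x ^ 2) + c ^ 2 := by
  induction m with
  | zero => intro c; simp
  | succ m ih =>
    intro c
    rw [sum_fin_succ_fun]
    simp only [Fin.prod_univ_succ, Fin.sum_univ_succ, Fin.cons_zero, Fin.cons_succ]
    have h : ∀ x : X, ∑ ys : Fin m → X, w x * (∏ j, w (ys j)) * (f x + ∑ j, f (ys j) + c) ^ 2
        = w x * (m * (∑ x, w x * f x ^ 2)) + w x * f x ^ 2 + 2 * c * (w x * f x)
          + w x * c ^ 2 := by
      intro x
      have := ih (f x + c)
      calc _ = w x * ∑ ys : Fin m → X, (∏ j, w (ys j)) * (∑ j, f (ys j) + (f x + c)) ^ 2 := by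
            rw [Finset.mul_sum]; refine Finset.sum_congr rfl fun ys _ => by ring
        _ = _ := by rw [this]; ring
    simp only [h, Finset.sum_add_distrib, ← Finset.mul_sum, ← Finset.sum_mul, hw, hf]
    push_cast; ring

lemma condPMF_nonneg (μ : X → ℝ) (hμ : ∀ x, 0 ≤ μ x) (A : Finset X) (hA : 0 < Pw μ A) (x : X) :
    0 ≤ condPMF μ A x := by
  unfold condPMF
  apply div_nonneg _ hA.le
  split_ifs
  · exact hμ x
  · exact le_rfl

lemma condPMF_sum (μ : X → ℝ) (A : Finset X) (hA : 0 < Pw μ A) :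
    ∑ x, condPMF μ A x = 1 := by
  unfold condPMF
  rw [← Finset.sum_div, Finset.sum_ite_mem, Finset.univ_inter]
  exact div_self hA.ne'

lemma condPMF_ind (μ : X → ℝ) (A : Finset X) (S : X → Prop) [DecidablePred S] :
    ∑ x, condPMF μ A x * (if S x then (1:ℝ) else 0) = cPw μ (univ.filter S) A := by
  unfold condPMF cPw Pw
  simp only [div_mul_eq_mul_div]
  rw [← Finset.sum_div]
  congr 1
  rw [← Finset.filter_mem_eq_inter, Finset.filter_filter, Finset.sum_filter]
  refine Finset.sum_congr rfl fun x _ => ?_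
  by_cases h1 : S x <;> by_cases h2 : x ∈ A <;> simp [h1, h2]

lemma ind_moments (w : X → ℝ) (hw : ∑ x, w x = 1) (S : X → Prop) [DecidablePred S] (p : ℝ)
    (hp : ∑ x, w x * (if S x then (1:ℝ) else 0) = p) (a : ℝ) :
    ∑ x, w x * (a * ((if S x then (1:ℝ) else 0) - p)) = 0 ∧
    ∑ x, w x * (a * ((if S x then (1:ℝ) else 0) - p)) ^ 2 = a ^ 2 * (p * (1 - p)) := by
  constructor
  · have : ∀ x, w x * (a * ((if S x then (1:ℝ) else 0) - p))
      = a * (w x * (if S x then (1:ℝ) else 0)) - a * p * w x := fun x => by ring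
    simp only [this, Finset.sum_sub_distrib, ← Finset.mul_sum, hw, hp]
    ring
  · have : ∀ x, w x * (a * ((if S x then (1:ℝ) else 0) - p)) ^ 2
      = a ^ 2 * (1 - 2 * p) * (w x * (if S x then (1:ℝ) else 0)) + a ^ 2 * p ^ 2 * w x := fun x => by
        split_ifs <;> ring
    simp only [this, Finset.sum_add_distrib, ← Finset.mul_sum, hw, hp]
    ring

lemma empFreq_sum (U : Finset X) (g : X → X) {m : ℕ} (hm : 0 < m) (xs : Fin m → X) (p k : ℝ) :
    ∑ j, (k / m) * ((if g (xs j) ∈ U then (1:ℝ) else 0) - p) = k * (empFreq U g xs - p) := by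
  have : (m:ℝ) ≠ 0 := by positivity
  unfold empFreq
  rw [← Finset.mul_sum, Finset.sum_sub_distrib]
  simp
  field_simp

lemma empFreq_nonneg (U : Finset X) (g : X → X) {m : ℕ} (xs : Fin m → X) :
    0 ≤ empFreq U g xs := by
  unfold empFreq
  refine div_nonneg (Finset.sum_nonneg fun j _ => ?_) (by positivity)
  split_ifs <;> norm_num

lemma empFreq_le_one (U : Finset X) (g : X → X) {m : ℕ} (xs : Fin m → X) :
    empFreq U g xs ≤ 1 := by
  unfold empFreq
  refine div_le_one_of_le₀ ?_ (by positivity)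
  calc _ ≤ ∑ j : Fin m, (1:ℝ) := Finset.sum_le_sum fun j _ => by split_ifs <;> norm_num
    _ = m := by simp

lemma empFreq_ge (U : Finset X) (g : X → X) {m : ℕ} (xs : Fin m → X)
    (h : empFreq U g xs ≠ 0) : 1 / (m:ℝ) ≤ empFreq U g xs := by
  unfold empFreq at h ⊢
  rw [Finset.sum_boole] at h ⊢
  have h1 : #{j | g (xs j) ∈ U} ≠ 0 := by
    intro h0; apply h; rw [h0]; simp
  gcongr
  exact_mod_cast Nat.one_le_iff_ne_zero.mpr h1

lemma empRatio_le (U : Finset X) (g : X → X) {nA nB : ℕ}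
    (xs : Fin nA → X) (zs : Fin nB → X) (hB : 0 < nB) : empRatio U g xs zs ≤ nB := by
  unfold empRatio
  by_cases h : empFreq U id zs = 0
  · rw [h]; simp
  · have h1 := empFreq_ge U id zs h
    have hB' : (0:ℝ) < nB := by positivity
    have h0 : 0 < empFreq U id zs := lt_of_lt_of_le (by positivity) h1
    rw [div_le_iff₀ h0]
    have := empFreq_le_one U g xs
    rw [div_le_iff₀ hB'] at h1
    linarith

lemma arith_case (r v a : ℝ) (hr : 0 < r) (hv : 0 ≤ v) (hv1 : v ≤ 5/11)
    (h : 2.772 * (16 * v + 4 * a) ≤ 4 * r ^ 2) :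
    a + v * (1 + r) ^ 2 ≤ r ^ 2 := by
  have h1 : 2 * r * v ≤ 0.18 * r ^ 2 + v ^ 2 / 0.18 := by
    have := sq_nonneg (0.18 * r - v)
    rw [← sub_nonneg]
    have e : 0.18 * r ^ 2 + v ^ 2 / 0.18 - 2 * r * v = (0.18 * r - v)^2 / 0.18 := by
      field_simp; ring
    rw [e]; positivity
  have h2 : v ^ 2 ≤ 5/11 * v := by nlinarith
  have h3 : v * r ^ 2 ≤ 5/11 * r^2 := by nlinarith [sq_nonneg r]
  norm_num at h1 h
  nlinarith

set_option maxHeartbeats 1000000 in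
/-- the ghost sample does not exceed the mean by more than `t/2` with probability at least 1/2 -/
lemma ghost_bound
    (μ : X → ℝ) (A B : Finset X) (n : X → X) (U : Finset X)
    (qbar t : ℝ) (nA nB : ℕ)
    (hμ : ∀ x, 0 ≤ μ x)
    (hA : 0 < Pw μ A) (hB : 0 < Pw μ B)
    (hqbar : 0 < qbar) (hq : qbar ≤ cPw μ U B)
    (hnA : 0 < nA) (hnB : 0 < nB)
    (ht : 0 < t)
    (htlarge : (nA : ℝ) * t ^ 2 ≥
      (4 + Real.sqrt (nB * qbar / nA)) ^ 2 * Real.log 16 /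
        ((nB * qbar / nA) * qbar ^ 2)) :
    1 / 2 ≤ ∑ xs : Fin nA → X, ∑ zs : Fin nB → X, prodW μ A xs * prodW μ B zs *
      (if empRatio U n xs zs ≤
          cPw μ (univ.filter fun x => n x ∈ U) A / cPw μ U B + t / 2 then (1:ℝ) else 0) := by
  have hnA' : (0:ℝ) < nA := by positivity
  have hnB' : (0:ℝ) < nB := by positivity
  have hpe := condPMF_ind μ A (fun x => n x ∈ U)
  have hqe := condPMF_ind μ B (fun x => x ∈ U)
  rw [show (univ.filter fun x => x ∈ U) = U by ext; simp] at hqe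
  set p := cPw μ (univ.filter fun x => n x ∈ U) A with hp
  set q := cPw μ U B with hq'
  have wA := condPMF_sum μ A hA
  have wB := condPMF_sum μ B hB
  have nnA := condPMF_nonneg μ hμ A hA
  have nnB := condPMF_nonneg μ hμ B hB
  have hq0 : 0 < q := hqbar.trans_le hq
  have hp0 : 0 ≤ p := by
    rw [← hpe]
    exact Finset.sum_nonneg fun x _ => mul_nonneg (nnA x) (by split_ifs <;> norm_num)
  have hp1 : p ≤ 1 := by
    rw [← hpe]
    refine le_trans ?_ wA.le
    exact Finset.sum_le_sum fun x _ => by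
      have := nnA x
      split_ifs <;> simp [this]
  have hq1 : q ≤ 1 := by
    rw [← hqe]
    refine le_trans ?_ wB.le
    exact Finset.sum_le_sum fun x _ => by
      have := nnB x
      split_ifs <;> simp [this]
  have pA : ∀ xs : Fin nA → X, 0 ≤ prodW μ A xs := fun xs => Finset.prod_nonneg fun j _ => nnA _
  have pB : ∀ xs : Fin nB → X, 0 ≤ prodW μ B xs := fun xs => Finset.prod_nonneg fun j _ => nnB _
  have sA : ∑ xs : Fin nA → X, prodW μ A xs = 1 := sum_prod_one _ wA nA
  have sB : ∑ xs : Fin nB → X, prodW μ B xs = 1 := sum_prod_one _ wB nB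
  have hlog : (2.772 : ℝ) ≤ Real.log 16 := by
    have : (16:ℝ) = 2 ^ 4 := by norm_num
    rw [this, Real.log_pow]
    have := Real.log_two_gt_d9
    push_cast; linarith
  -- the main numerical consequence
  have key : 2.772 * (16 * (1 / (nB * qbar)) + 1 / nA) ≤ t ^ 2 * qbar ^ 2 := by
    set γ := (nB : ℝ) * qbar / nA with hγ
    have hγ0 : 0 < γ := by positivity
    have h1 : 16 + γ ≤ (4 + Real.sqrt γ) ^ 2 := by
      nlinarith [Real.sq_sqrt hγ0.le, Real.sqrt_nonneg γ]
    have h2 : (16 + γ) * 2.772 ≤ (4 + Real.sqrt γ) ^ 2 * Real.log 16 := by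
      apply mul_le_mul h1 hlog (by norm_num) (by positivity)
    rw [ge_iff_le, div_le_iff₀ (by positivity)] at htlarge
    have h3 := h2.trans htlarge
    have e : 2.772 * (16 * (1 / (nB * qbar)) + 1 / nA) = ((16 + γ) * 2.772) / (nA * γ) := by
      rw [hγ]; field_simp
    rw [e, div_le_iff₀ (by positivity)]
    linarith
  have one_case : ∑ xs : Fin nA → X, ∑ zs : Fin nB → X, prodW μ A xs * prodW μ B zs = 1 := by
    simp only [← Finset.mul_sum, sB, mul_one, sA]
  by_cases hw : (nB : ℝ) * qbar ≤ 2.2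
  · -- trivial case
    have htn : 2 * (nB : ℝ) ≤ t := by
      set w := (nB : ℝ) * qbar with hwd
      have hw0 : 0 < w := by positivity
      have h1 : 2.772 * (16 * (1 / w)) ≤ t ^ 2 * qbar ^ 2 := by
        have : 0 < 1 / (nA:ℝ) := by positivity
        linarith
      have h2 : 2.772 * 16 ≤ t ^ 2 * qbar ^ 2 * w := by
        have : 2.772 * (16 * (1 / w)) = 2.772 * 16 / w := by ring
        rw [this, div_le_iff₀ hw0] at h1
        exact h1
      have h3 : w ^ 3 ≤ 2.2 ^ 3 := by gcongr
      refine (sq_le_sq₀ (by positivity) ht.le).mp ?_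
      have h4 : 2.772 * 16 * (nB:ℝ)^2 ≤ t ^ 2 * w ^ 3 := by
        have : t ^ 2 * w ^ 3 = t ^ 2 * qbar ^ 2 * w * (nB:ℝ)^2 := by rw [hwd]; ring
        rw [this]; gcongr
      have h5 : t ^ 2 * w ^ 3 ≤ t ^ 2 * 2.2 ^ 3 := by gcongr
      norm_num at h4 h5 ⊢
      nlinarith [sq_nonneg t, sq_nonneg (nB:ℝ)]
    have : ∀ (xs : Fin nA → X) (zs : Fin nB → X), empRatio U n xs zs ≤ p / q + t / 2 := by
      intro xs zs
      have := empRatio_le U n xs zs hnB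
      have : 0 ≤ p / q := by positivity
      linarith
    simp only [this, if_true, mul_one, one_case]
    norm_num
  · push Not at hw
    set k := p / q + t / 2 with hk
    set r := t * q / 2 with hr
    have hr0 : 0 < r := by positivity
    have hk0 : 0 ≤ k := by positivity
    have hkq : k * q = p + r := by rw [hk, hr]; field_simp
    obtain ⟨mA1, mA2⟩ := ind_moments _ wA (fun x => n x ∈ U) p hpe (1 / nA)
    obtain ⟨mB1, mB2⟩ := ind_moments _ wB (fun x => x ∈ U) q hqe (-k / nB)
    have qA := sum_prod_sq _ _ wA mA1 nA
    have qB := sum_prod_sq _ _ wB mB1 nB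
    rw [mA2] at qA
    rw [mB2] at qB
    simp only [empFreq_sum U n hnA] at qA
    have hid := fun zs : Fin nB → X => empFreq_sum U id hnB zs q (-k)
    simp only [id] at hid
    simp only [hid] at qB
    have tot : ∑ xs : Fin nA → X, ∑ zs : Fin nB → X, prodW μ A xs * prodW μ B zs *
        (-k * (empFreq U id zs - q) + (1 * (empFreq U n xs - p) + r)) ^ 2
        = nB * ((-k / nB) ^ 2 * (q * (1 - q))) + (nA * ((1 / nA) ^ 2 * (p * (1 - p))) + r ^ 2) := by
      have inner : ∀ xs : Fin nA → X, ∑ zs : Fin nB → X, prodW μ A xs * prodW μ B zs *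
        (-k * (empFreq U id zs - q) + (1 * (empFreq U n xs - p) + r)) ^ 2
        = prodW μ A xs * (nB * ((-k / nB) ^ 2 * (q * (1 - q)))) +
          prodW μ A xs * (1 * (empFreq U n xs - p) + r) ^ 2 := by
        intro xs
        simp only [mul_assoc (prodW μ A xs), ← Finset.mul_sum]
        rw [← mul_add]
        congr 1
        exact qB _
      rw [Finset.sum_congr rfl fun xs _ => inner xs, Finset.sum_add_distrib, ← Finset.sum_mul, sA,
        one_mul]
      congr 1
      exact qA r
    have var : nB * ((-k / nB) ^ 2 * (q * (1 - q))) + (nA * ((1 / nA) ^ 2 * (p * (1 - p))) + r ^ 2)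
        ≤ 2 * r ^ 2 := by
      have hqq : 1 / ((nB:ℝ) * q) ≤ 1 / (nB * qbar) := by gcongr
      have hv : 1 / ((nB:ℝ) * q) ≤ 5 / 11 := by
        refine hqq.trans ?_
        rw [div_le_div_iff₀ (by positivity) (by norm_num)]
        norm_num at hw ⊢
        linarith
      have h4 : 2.772 * (16 * (1 / ((nB:ℝ) * q)) + 4 * (1 / (4 * nA))) ≤ 4 * r ^ 2 := by
        have e1 : 4 * (1 / (4 * (nA:ℝ))) = 1 / nA := by field_simp
        have e2 : 4 * r ^ 2 = t ^ 2 * q ^ 2 := by rw [hr]; ring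
        have e3 : t ^ 2 * qbar ^ 2 ≤ t ^ 2 * q ^ 2 := by gcongr
        rw [e1, e2]
        linarith
      have fin := arith_case r _ _ hr0 (by positivity) hv h4
      have b1 : (nA:ℝ) * ((1 / nA) ^ 2 * (p * (1 - p))) ≤ 1 / (4 * nA) := by
        have : (nA:ℝ) * ((1 / nA) ^ 2 * (p * (1 - p))) = (4 * (p * (1 - p))) * (1 / (4 * nA)) := by
          field_simp
        rw [this]
        apply mul_le_of_le_one_left (by positivity)
        have e5 : 1 - 4 * (p * (1 - p)) = (2 * p - 1) ^ 2 := by ring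
        have e6 := sq_nonneg (2 * p - 1)
        rw [← e5] at e6
        exact sub_nonneg.mp e6
      have b2 : (nB:ℝ) * ((-k / nB) ^ 2 * (q * (1 - q))) ≤ 1 / (nB * q) * (1 + r) ^ 2 := by
        have : (nB:ℝ) * ((-k / nB) ^ 2 * (q * (1 - q))) = 1 / (nB * q) * ((k * q) ^ 2 * (1 - q)) := by
          field_simp
        rw [this, hkq]
        gcongr
        calc (p + r) ^ 2 * (1 - q) ≤ (p + r) ^ 2 * 1 := by gcongr; linarith
          _ ≤ (1 + r) ^ 2 := by rw [mul_one]; gcongr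
      linarith
    have pt : ∀ (xs : Fin nA → X) (zs : Fin nB → X),
        prodW μ A xs * prodW μ B zs - (1 / (4 * r ^ 2)) * (prodW μ A xs * prodW μ B zs *
        (-k * (empFreq U id zs - q) + (1 * (empFreq U n xs - p) + r)) ^ 2)
        ≤ prodW μ A xs * prodW μ B zs * (if empRatio U n xs zs ≤ k then (1:ℝ) else 0) := by
      intro xs zs
      have hw := mul_nonneg (pA xs) (pB zs)
      set Y := -k * (empFreq U id zs - q) + (1 * (empFreq U n xs - p) + r) with hY
      have : 1 - (1 / (4 * r ^ 2)) * Y ^ 2 ≤ (if empRatio U n xs zs ≤ k then (1:ℝ) else 0) := by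
        split_ifs with h
        · have : 0 ≤ (1 / (4 * r ^ 2)) * Y ^ 2 := by positivity
          linarith
        · push Not at h
          have hqh : 0 < empFreq U id zs := by
            refine lt_of_le_of_ne (empFreq_nonneg _ _ _) fun h0 => ?_
            unfold empRatio at h
            rw [← h0, div_zero] at h
            linarith
          unfold empRatio at h
          rw [lt_div_iff₀ hqh] at h
          have hY2 : 2 * r ≤ Y := by
            have e7 : Y - 2 * r = (empFreq U n xs - k * empFreq U id zs) + (k * q - (p + r)) := by
              rw [hY]; ring
            rw [hkq] at e7
            linarith
          have : (2 * r) ^ 2 ≤ Y ^ 2 := by gcongr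
          have : 1 ≤ (1 / (4 * r ^ 2)) * Y ^ 2 := by
            rw [div_mul_eq_mul_div, one_mul, le_div_iff₀ (by positivity)]
            linarith
          linarith
      calc _ = prodW μ A xs * prodW μ B zs * (1 - (1 / (4 * r ^ 2)) * Y ^ 2) := by ring
        _ ≤ _ := by gcongr
    refine le_trans ?_ (Finset.sum_le_sum fun xs _ => Finset.sum_le_sum fun zs _ => pt xs zs)
    simp only [Finset.sum_sub_distrib]
    rw [one_case]
    have pull : ∀ (c : ℝ) (F : (Fin nA → X) → (Fin nB → X) → ℝ),
        ∑ xs, ∑ zs, c * F xs zs = c * ∑ xs, ∑ zs, F xs zs := by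
      intro c F
      simp only [Finset.mul_sum]
    rw [pull, tot]
    have : 1 / (4 * r ^ 2) * (nB * ((-k / nB) ^ 2 * (q * (1 - q))) +
        (nA * ((1 / nA) ^ 2 * (p * (1 - p))) + r ^ 2)) ≤ 1 / (4 * r ^ 2) * (2 * r ^ 2) := by
      gcongr
    have e : 1 / (4 * r ^ 2) * (2 * r ^ 2) = 1 / 2 := by field_simp; norm_num
    linarith

/-- Lemma `lem:symm`: symmetrization for empirical expansion. -/
theorem symmetrization_empirical_expansion
    (μ : X → ℝ) (A B : Finset X) (n : X → X) (M : Finset (Finset X))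
    (qbar t : ℝ) (nA nB : ℕ)
    (hμ : ∀ x, 0 ≤ μ x) (hμ1 : ∑ x, μ x = 1)
    (hA : 0 < Pw μ A) (hB : 0 < Pw μ B)
    (hn : ∀ x ∈ A, n x ∈ B)
    (hMB : ∀ U ∈ M, U ⊆ B)
    (hqbar : 0 < qbar) (hq : ∀ U ∈ M, qbar ≤ cPw μ U B)
    (hnA : 0 < nA) (hnB : 0 < nB)
    (ht : 0 < t)
    (htlarge : (nA : ℝ) * t ^ 2 ≥
      (4 + Real.sqrt (nB * qbar / nA)) ^ 2 * Real.log 16 /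
        ((nB * qbar / nA) * qbar ^ 2)) :
    samplePr μ A B nA nB (fun xs zs =>
        ∃ U ∈ M, empRatio U n xs zs -
          cPw μ (univ.filter fun x => n x ∈ U) A / cPw μ U B > t) ≤
      2 * samplePr4 μ A B nA nB (fun xs zs xs' zs' =>
        ∃ U ∈ M, empRatio U n xs zs - empRatio U n xs' zs' > t / 2) := by
  unfold samplePr samplePr4
  have nnA := condPMF_nonneg μ hμ A hA
  have nnB := condPMF_nonneg μ hμ B hB
  have pA : ∀ xs : Fin nA → X, 0 ≤ prodW μ A xs := fun xs => Finset.prod_nonneg fun j _ => nnA _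
  have pB : ∀ xs : Fin nB → X, 0 ≤ prodW μ B xs := fun xs => Finset.prod_nonneg fun j _ => nnB _
  rw [Finset.mul_sum]
  refine Finset.sum_le_sum fun xs _ => ?_
  rw [Finset.mul_sum]
  refine Finset.sum_le_sum fun zs _ => ?_
  have hw := mul_nonneg (pA xs) (pB zs)
  split_ifs with h
  · obtain ⟨U, hU, hUt⟩ := h
    have g := ghost_bound μ A B n U qbar t nA nB hμ hA hB hqbar (hq U hU) hnA hnB ht htlarge
    have : (prodW μ A xs * prodW μ B zs) * (1 / 2) ≤ ∑ xs' : Fin nA → X, ∑ zs' : Fin nB → X,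
        prodW μ A xs * prodW μ B zs * prodW μ A xs' * prodW μ B zs' *
        (if ∃ U ∈ M, empRatio U n xs zs - empRatio U n xs' zs' > t / 2 then (1:ℝ) else 0) := by
      refine (mul_le_mul_of_nonneg_left g hw).trans ?_
      rw [Finset.mul_sum]
      refine Finset.sum_le_sum fun xs' _ => ?_
      rw [Finset.mul_sum]
      refine Finset.sum_le_sum fun zs' _ => ?_
      have hw' := mul_nonneg hw (mul_nonneg (pA xs') (pB zs'))
      calc _ = prodW μ A xs * prodW μ B zs * (prodW μ A xs' * prodW μ B zs') *
            (if empRatio U n xs' zs' ≤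
              cPw μ (univ.filter fun x => n x ∈ U) A / cPw μ U B + t / 2 then (1:ℝ) else 0) := by
              ring
        _ ≤ prodW μ A xs * prodW μ B zs * (prodW μ A xs' * prodW μ B zs') *
            (if ∃ U ∈ M, empRatio U n xs zs - empRatio U n xs' zs' > t / 2 then (1:ℝ) else 0) := by
              refine mul_le_mul_of_nonneg_left ?_ hw'
              split_ifs with h1 h2 h2
              · exact le_rfl
              · exact absurd ⟨U, hU, by linarith⟩ h2
              · norm_num
              · exact le_rfl
        _ = _ := by ring
    refine le_trans (le_of_eq (by ring : _ = 2 * (prodW μ A xs * prodW μ B zs * (1 / 2))))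
      (mul_le_mul_of_nonneg_left (this.trans (le_of_eq ?_)) (by norm_num))
    refine Finset.sum_congr rfl fun xs' _ => Finset.sum_congr rfl fun zs' _ => ?_
    congr
  · rw [mul_zero]
    refine mul_nonneg (by norm_num) (Finset.sum_nonneg fun xs' _ => Finset.sum_nonneg fun zs' _ => ?_)
    have hw' := mul_nonneg (mul_nonneg hw (pA xs')) (pB zs')
    exact mul_nonneg hw' (by split_ifs <;> norm_num)
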